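/- Let R be the quotient of ℂ⟨e1,e2,e3⟩ by the two-sided ideal generated by e1e2 − e2e1 − e2, e1e3 − e3e1, and e2e3 + e3e2. Then h_0 = 1, h_1 = 2, h_2 = 1, and h_n = 0 for all n ≥ 3. -/

import Mathlib

open CategoryTheory FreeAlgebra

/-- `Ext^m_R(ℂ,ℂ)` as a ℂ-module, where `ℂ` is an `R`-module via the augmentation `ε`. -/
noncomputable def extC (R : Type) [Ring R] [Algebra ℂ R] (ε : R →ₐ[ℂ] ℂ) (m : ℕ) :
    ModuleCat ℂ :=
  letI : Module R ℂ := Module.compHom ℂ ε.toRingHom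
  ((Ext ℂ (ModuleCat R) m).obj (Opposite.op (ModuleCat.of R ℂ))).obj (ModuleCat.of R ℂ)

/-- `h_m = dim_ℂ Ext^m_R(ℂ,ℂ)`. -/
noncomputable def extDim (R : Type) [Ring R] [Algebra ℂ R] (ε : R →ₐ[ℂ] ℂ) (m : ℕ) : ℕ :=
  Module.finrank ℂ (extC R ε m)

/-- Relations: `e1e2 - e2e1 = e2`, `e1e3 - e3e1 = 0`, `e2e3 + e3e2 = 0`. -/
inductive CRel : FreeAlgebra ℂ (Fin 3) → FreeAlgebra ℂ (Fin 3) → Prop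
  | r12 : CRel (ι ℂ 0 * ι ℂ 1 - ι ℂ 1 * ι ℂ 0) (ι ℂ 1)
  | r13 : CRel (ι ℂ 0 * ι ℂ 2 - ι ℂ 2 * ι ℂ 0) 0
  | r23 : CRel (ι ℂ 1 * ι ℂ 2 + ι ℂ 2 * ι ℂ 1) 0

/-!
Moving `e₂` to the right through a polynomial in `e₁` and `e₃` substitutes `e₁ - 1` for `e₁` and
`-e₃` for `e₃`, so `R` is a skew polynomial ring `ℂ[e₁, e₃][e₂; σ]`. Hence `e₂`, `e₃`, `e₁` is a
regular sequence: `e₂` is right regular in `R`, `e₃` is regular modulo `e₂`, and `e₁` is regular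
modulo `e₂` and `e₃`. As for a Koszul complex, regularity makes the complex
`0 → R → R³ → R³ → R`, whose middle matrix lists the three defining relations, a free resolution
of the trivial module. Applying `Hom_R(-, ℂ)` applies `ε` to its matrices; only the constants
`±1` coming from the bracket `⟨e₁, e₂⟩ = e₂` survive, and the three matrices get the ranks `0`,
`1`, `1`. Rank counting gives `1`, `3 - 0 - 1`, `3 - 1 - 1`, `1 - 1`.
-/

universe u

open scoped Matrix

section LinearAlgebra

lemma exact_vecMulLinear_of_mul_eq_zero {R l m n : Type*} [Semiring R] [Fintype l] [Fintype m]
    {A : Matrix l m R} {B : Matrix m n R} (hAB : A * B = 0)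
    (h : ∀ v, v ᵥ* B = 0 → ∃ w, w ᵥ* A = v) :
    Function.Exact A.vecMulLinear B.vecMulLinear := by
  refine fun v ↦ ⟨h v, ?_⟩
  rintro ⟨w, rfl⟩
  rw [Matrix.vecMulLinear_apply, Matrix.vecMulLinear_apply, Matrix.vecMul_vecMul, hAB,
    Matrix.vecMul_zero]

section Field

variable {k : Type*} [Field k]

lemma finrank_range_eq_of_equiv {V V' W W' : Type*} [AddCommGroup V] [Module k V]
    [AddCommGroup V'] [Module k V'] [AddCommGroup W] [Module k W] [AddCommGroup W'] [Module k W']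
    {f : V →ₗ[k] W} {g : V' →ₗ[k] W'} (e : V ≃ₗ[k] V') (e' : W ≃ₗ[k] W')
    (h : ∀ v, e' (f v) = g (e v)) :
    Module.finrank k f.range = Module.finrank k g.range := by
  have conj : e'.toLinearMap ∘ₗ f = g ∘ₗ e.toLinearMap := LinearMap.ext h
  rw [← LinearEquiv.range_comp e g, ← conj, LinearMap.range_comp]
  exact (e'.finrank_map_eq f.range).symm

lemma rank_vecMulVec_of_ne_zero {m n : Type*} [Finite m] [Fintype n] {v : m → k} {w : n → k}
    (hv : v ≠ 0) (hw : w ≠ 0) : (Matrix.vecMulVec v w).rank = 1 := by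
  classical
  refine le_antisymm (Matrix.rank_vecMulVec_le v w) (Nat.one_le_iff_ne_zero.2 fun h ↦ ?_)
  rw [Matrix.rank, Submodule.finrank_eq_zero, LinearMap.range_eq_bot] at h
  obtain ⟨i, hi⟩ := Function.ne_iff.1 hv
  obtain ⟨j, hj⟩ := Function.ne_iff.1 hw
  have vanishes : Matrix.vecMulVec v w = 0 := Matrix.toLin'.map_eq_zero_iff.1 h
  exact mul_ne_zero hi hj (congrFun₂ vanishes i j)

end Field

variable {k : Type u} [Field k]

lemma finrank_homology_add (S : ShortComplex (ModuleCat.{u} k))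
    [Module.Finite k S.X₂] :
    Module.finrank k S.homology + Module.finrank k S.f.hom.range +
      Module.finrank k S.g.hom.range = Module.finrank k S.X₂ := by
  have range_toCycles : Module.finrank k S.moduleCatToCycles.range =
      Module.finrank k S.f.hom.range := by
    have : S.f.hom = S.g.hom.ker.subtype ∘ₗ S.moduleCatToCycles := rfl
    rw [this, LinearMap.range_comp]
    exact (Submodule.finrank_map_subtype_eq _ _).symm
  have quotient : Module.finrank k S.homology + Module.finrank k S.moduleCatToCycles.range =
      Module.finrank k S.g.hom.ker := by
    rw [S.moduleCatHomologyIso.toLinearEquiv.finrank_eq]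
    exact Submodule.finrank_quotient_add_finrank S.moduleCatToCycles.range
  rw [← range_toCycles, quotient, add_comm, LinearMap.finrank_range_add_finrank_ker]

lemma finrank_homology_add_of_prev_next {ι : Type*} {c : ComplexShape ι}
    (K : HomologicalComplex (ModuleCat.{u} k) c) (i j l : ι) [Module.Finite k (K.X j)]
    (hi : c.prev j = i) (hl : c.next j = l) :
    Module.finrank k (K.homology j) + Module.finrank k (K.d i j).hom.range +
      Module.finrank k (K.d j l).hom.range = Module.finrank k (K.X j) := by
  rw [(K.homologyIsoSc' i j l hi hl).toLinearEquiv.finrank_eq]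
  have : Module.Finite k (K.sc' i j l).X₂ := inferInstanceAs (Module.Finite k (K.X j))
  exact finrank_homology_add (K.sc' i j l)

end LinearAlgebra

section FiniteFreeResolution

variable {R : Type u} [Ring R]

/-- A resolution of a left `R`-module `M` by free modules of finite rank, whose differentials are
given by matrices acting on row vectors from the right. -/
structure FiniteFreeResolution (M : ModuleCat.{u} R) where
  rank : ℕ → ℕ
  d (n : ℕ) : Matrix (Fin (rank (n + 1))) (Fin (rank n)) R
  aug : (Fin (rank 0) → R) →ₗ[R] M
  aug_surjective : Function.Surjective aug
  exact_aug : Function.Exact (d 0).vecMulLinear aug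
  exact_d (n : ℕ) : Function.Exact (d (n + 1)).vecMulLinear (d n).vecMulLinear

namespace FiniteFreeResolution

variable {M : ModuleCat.{u} R} (F : FiniteFreeResolution M)

/-- The chain complex of free modules underlying a finite free resolution. -/
noncomputable def complex : ChainComplex (ModuleCat.{u} R) ℕ :=
  ChainComplex.of (fun n ↦ ModuleCat.of R (Fin (F.rank n) → R))
    (fun n ↦ ModuleCat.ofHom (F.d n).vecMulLinear)
    fun n ↦ ModuleCat.hom_ext (F.exact_d n).linearMap_comp_eq_zero

lemma complex_d (n : ℕ) :
    F.complex.d (n + 1) n = ModuleCat.ofHom (F.d n).vecMulLinear :=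
  ChainComplex.of_d (fun n ↦ ModuleCat.of R (Fin (F.rank n) → R))
    (fun n ↦ ModuleCat.ofHom (F.d n).vecMulLinear) n

lemma complex_d_comp_aug : F.complex.d 1 0 ≫ ModuleCat.ofHom F.aug = 0 := by
  rw [complex_d]
  exact ModuleCat.hom_ext F.exact_aug.linearMap_comp_eq_zero

/-- The augmentation of a finite free resolution, as a map of chain complexes. -/
noncomputable def π : F.complex ⟶ (ChainComplex.single₀ (ModuleCat.{u} R)).obj M :=
  (ChainComplex.toSingle₀Equiv _ _).symm ⟨ModuleCat.ofHom F.aug, F.complex_d_comp_aug⟩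

lemma exactAt_succ (n : ℕ) : F.complex.ExactAt (n + 1) := by
  rw [HomologicalComplex.exactAt_iff' _ (n + 2) (n + 1) n (by simp) (by simp),
    ShortComplex.ShortExact.moduleCat_exact_iff_function_exact]
  change Function.Exact (F.complex.d (n + 2) (n + 1)).hom (F.complex.d (n + 1) n).hom
  rw [complex_d, complex_d]
  exact F.exact_d n

lemma quasiIsoAt_zero_π : QuasiIsoAt F.π 0 := by
  rw [ChainComplex.quasiIsoAt₀_iff, ShortComplex.quasiIso_iff_of_zeros' _ rfl rfl rfl]
  have exact_aug : (ShortComplex.mk _ _ F.complex_d_comp_aug).Exact := by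
    rw [ShortComplex.ShortExact.moduleCat_exact_iff_function_exact]
    change Function.Exact (F.complex.d 1 0).hom F.aug
    rw [complex_d]
    exact F.exact_aug
  have epi_aug : Epi (ModuleCat.ofHom F.aug) :=
    (ModuleCat.epi_iff_surjective _).2 F.aug_surjective
  refine (ShortComplex.exact_and_epi_g_iff_of_iso (ShortComplex.isoMk (Iso.refl _) (Iso.refl _)
    (Iso.refl _) ?_ ?_)).1 ⟨exact_aug, epi_aug⟩
  · simp only [Iso.refl_hom, HomologicalComplex.shortComplexFunctor'_obj_f]
    rfl
  · simp only [π, Iso.refl_hom, HomologicalComplex.shortComplexFunctor'_map_τ₂]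
    rfl

/-- A finite free resolution is a projective resolution. -/
noncomputable def toProjectiveResolution : ProjectiveResolution M where
  complex := F.complex
  projective n := inferInstanceAs (Projective (ModuleCat.of R (Fin (F.rank n) → R)))
  π := F.π
  quasiIso := ⟨fun
    | 0 => F.quasiIsoAt_zero_π
    | n + 1 => by
      rw [quasiIsoAt_iff_exactAt' (hL := ChainComplex.exactAt_succ_single_obj ..)]
      exact F.exactAt_succ n⟩

end FiniteFreeResolution

end FiniteFreeResolution

section Augmented

variable {k R : Type u} [Field k] [Ring R] [Algebra k R]

/-- The field `k` as a left `R`-module through the augmentation `ε`. -/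
noncomputable def trivialModule (ε : R →ₐ[k] k) : ModuleCat.{u} R :=
  letI : Module R k := Module.compHom k ε.toRingHom
  ModuleCat.of R k

open scoped ModuleCat in
/-- The identity of `k`, identifying the `k`-structure that `trivialModule ε` inherits from `R`
with the standard one. -/
noncomputable def trivialModuleEquiv (ε : R →ₐ[k] k) : trivialModule ε ≃ₗ[k] k where
  toFun z := z
  invFun z := z
  map_add' _ _ := rfl
  map_smul' c z := congrArg (· * (show k from z)) (ε.commutes c)
  left_inv _ := rfl
  right_inv _ := rfl

/-- The augmentation as an `R`-linear map. -/
noncomputable def toTrivialModule (ε : R →ₐ[k] k) : R →ₗ[R] trivialModule ε where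
  toFun := ε
  map_add' := map_add ε
  map_smul' := map_mul ε

lemma toTrivialModule_surjective (ε : R →ₐ[k] k) : Function.Surjective (toTrivialModule ε) :=
  fun c ↦ ⟨algebraMap k R (trivialModuleEquiv ε c), ε.commutes _⟩

open scoped ModuleCat in
/-- Evaluation at the standard basis identifies `Hom_R(R^b, k)` with `k^b`. -/
noncomputable def homTrivialModuleEquiv (ε : R →ₐ[k] k) (b : ℕ) :
    (ModuleCat.of R (Fin b → R) ⟶ trivialModule ε) ≃ₗ[k] (Fin b → k) :=
  ModuleCat.homLinearEquiv ≪≫ₗ ((Pi.basisFun R (Fin b)).constr k).symm ≪≫ₗ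
    LinearEquiv.piCongrRight fun _ ↦ trivialModuleEquiv ε

lemma homTrivialModuleEquiv_apply (ε : R →ₐ[k] k) {b : ℕ}
    (f : ModuleCat.of R (Fin b → R) ⟶ trivialModule ε) (i : Fin b) :
    homTrivialModuleEquiv ε b f i = trivialModuleEquiv ε (f.hom (Pi.single i 1)) := by
  change trivialModuleEquiv ε (f.hom (Pi.basisFun R (Fin b) i)) = _
  rw [Pi.basisFun_apply]

lemma homTrivialModuleEquiv_vecMulLinear_comp (ε : R →ₐ[k] k) {m n : ℕ}
    (D : Matrix (Fin m) (Fin n) R) (f : ModuleCat.of R (Fin n → R) ⟶ trivialModule ε) :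
    homTrivialModuleEquiv ε m (ModuleCat.ofHom D.vecMulLinear ≫ f) =
      (D.map ε).mulVec (homTrivialModuleEquiv ε n f) := by
  ext i
  have row_eq_sum : Pi.single i 1 ᵥ* D = ∑ j, D i j • Pi.single j (1 : R) := by
    rw [Matrix.single_one_vecMul]
    exact pi_eq_sum_univ' (D i)
  have smul_eq (r : R) (z : trivialModule ε) :
      trivialModuleEquiv ε (r • z) = ε r * trivialModuleEquiv ε z := rfl
  rw [homTrivialModuleEquiv_apply, ModuleCat.hom_comp, LinearMap.comp_apply, ModuleCat.hom_ofHom,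
    Matrix.vecMulLinear_apply, row_eq_sum]
  simp only [map_sum, map_smul, smul_eq, Matrix.mulVec, dotProduct, Matrix.map_apply,
    homTrivialModuleEquiv_apply]

namespace FiniteFreeResolution

variable {M : ModuleCat.{u} R} (F : FiniteFreeResolution M) (ε : R →ₐ[k] k)

/-- The cochain complex `Hom_R(F, k)`, whose cohomology is `Ext_R(M, k)`. -/
noncomputable abbrev homComplex : CochainComplex (ModuleCat.{u} k) ℕ :=
  F.complex.linearYonedaObj k (trivialModule ε)

/-- Coordinates on `Hom_R(F, k)` in degree `n`, with respect to the dual of the standard basis. -/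
noncomputable def homComplexXEquiv (n : ℕ) : (F.homComplex ε).X n ≃ₗ[k] (Fin (F.rank n) → k) :=
  homTrivialModuleEquiv ε (F.rank n)

lemma homComplexXEquiv_d (n : ℕ) (f : (F.homComplex ε).X n) :
    F.homComplexXEquiv ε (n + 1) (((F.homComplex ε).d n (n + 1)).hom f) =
      ((F.d n).map ε).mulVec (F.homComplexXEquiv ε n f) := by
  refine Eq.trans ?_ (homTrivialModuleEquiv_vecMulLinear_comp ε (F.d n) f)
  rw [← complex_d]
  rfl

lemma finrank_range_homComplex_d (n : ℕ) :
    Module.finrank k ((F.homComplex ε).d n (n + 1)).hom.range = ((F.d n).map ε).rank :=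
  finrank_range_eq_of_equiv (F.homComplexXEquiv ε n) (F.homComplexXEquiv ε (n + 1))
    (F.homComplexXEquiv_d ε n)

lemma finrank_homComplex_X (n : ℕ) : Module.finrank k ((F.homComplex ε).X n) = F.rank n := by
  rw [(F.homComplexXEquiv ε n).finrank_eq, Module.finrank_fin_fun]

instance finite_homComplex_X (n : ℕ) : Module.Finite k ((F.homComplex ε).X n) :=
  Module.Finite.equiv (F.homComplexXEquiv ε n).symm

theorem finrank_ext_zero_add :
    Module.finrank k (((Ext k (ModuleCat R) 0).obj (.op M)).obj (trivialModule ε)) +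
      ((F.d 0).map ε).rank = F.rank 0 := by
  rw [(F.toProjectiveResolution.isoExt 0 _).toLinearEquiv.finrank_eq]
  have incoming_eq_zero : (F.homComplex ε).d 0 0 = 0 := (F.homComplex ε).shape _ _ (by simp)
  have := finrank_homology_add_of_prev_next (F.homComplex ε) 0 0 1 (by simp) (by simp)
  rw [incoming_eq_zero, ModuleCat.hom_zero, LinearMap.range_zero, finrank_bot,
    finrank_range_homComplex_d, finrank_homComplex_X] at this
  exact this

theorem finrank_ext_succ_add (n : ℕ) :
    Module.finrank k (((Ext k (ModuleCat R) (n + 1)).obj (.op M)).obj (trivialModule ε)) +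
      ((F.d n).map ε).rank + ((F.d (n + 1)).map ε).rank = F.rank (n + 1) := by
  rw [(F.toProjectiveResolution.isoExt (n + 1) _).toLinearEquiv.finrank_eq,
    ← finrank_range_homComplex_d, ← finrank_range_homComplex_d, ← finrank_homComplex_X F ε]
  exact finrank_homology_add_of_prev_next (F.homComplex ε) n (n + 1) (n + 2) (by simp) (by simp)

end FiniteFreeResolution

end Augmented

section GeneratedAlgebra

variable {k A : Type*} [CommRing k] [Ring A] [Algebra k A] {G : Set A}

lemma isTwoSided_span_of_adjoin_eq_top (hG : Algebra.adjoin k G = ⊤) {S : Set A}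
    (hS : ∀ s ∈ S, ∀ g ∈ G, s * g ∈ Ideal.span S) : (Ideal.span S).IsTwoSided := by
  have mul_generator_mem {a g : A} (ha : a ∈ Ideal.span S) (hg : g ∈ G) :
      a * g ∈ Ideal.span S := by
    induction ha using Submodule.span_induction with
    | mem s hs => exact hS s hs g hg
    | zero => simp
    | add a b _ _ iha ihb => simpa only [add_mul] using add_mem iha ihb
    | smul r a _ iha => simpa only [smul_eq_mul, mul_assoc] using Ideal.mul_mem_left _ r iha
  refine ⟨fun {a} b ha ↦ ?_⟩
  have hb : b ∈ Algebra.adjoin k G := hG ▸ Algebra.mem_top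
  induction hb using Algebra.adjoin_induction generalizing a with
  | mem g hg => exact mul_generator_mem ha hg
  | algebraMap c => exact Algebra.commutes c a ▸ Ideal.mul_mem_left _ _ ha
  | add b c _ _ ihb ihc => simpa only [mul_add] using add_mem (ihb ha) (ihc ha)
  | mul b c _ _ ihb ihc => simpa only [mul_assoc] using ihc (ihb ha)

lemma mem_of_map_eq_zero_of_adjoin_eq_top (hG : Algebra.adjoin k G = ⊤) {B : Type*} [Ring B]
    [Algebra k B] (φ : A →ₐ[k] B) (s : B →ₐ[k] A) (I : Ideal A) [I.IsTwoSided]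
    (hI : ∀ g ∈ G, g - s (φ g) ∈ I) {a : A} (ha : φ a = 0) : a ∈ I := by
  have mk_eq : Ideal.Quotient.mkₐ k I = (Ideal.Quotient.mkₐ k I).comp (s.comp φ) :=
    AlgHom.ext_of_adjoin_eq_top hG fun g hg ↦ Ideal.Quotient.eq.2 (hI g hg)
  have mk_a : Ideal.Quotient.mkₐ k I a = 0 := by
    rw [mk_eq, AlgHom.comp_apply, AlgHom.comp_apply, ha, map_zero, map_zero]
  exact Ideal.Quotient.eq_zero_iff_mem.1 mk_a

end GeneratedAlgebra

section SkewPolynomial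

open Polynomial

variable {P A : Type*} [Semiring P] [Semiring A]

lemma semiconjBy_eval₂ {f g : P →+* A} {x y z : A} (hfg : ∀ p, SemiconjBy x (f p) (g p))
    (hyz : SemiconjBy x y z) (p : P[X]) : SemiconjBy x (p.eval₂ f y) (p.eval₂ g z) := by
  induction p using Polynomial.induction_on' with
  | add p q hp hq => simpa only [eval₂_add] using hp.add_right hq
  | monomial n a => simpa only [eval₂_monomial] using (hfg a).mul_right (hyz.pow_right n)

lemma eval₂_map_mul_X_of_semiconjBy {f : P →+* A} {σ : P →+* P} {x : A}
    (h : ∀ p, SemiconjBy x (f p) (f (σ p))) (p : P[X]) :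
    (p.map σ * X).eval₂ f x = x * p.eval₂ f x := by
  rw [eval₂_mul_X, eval₂_map]
  exact (semiconjBy_eval₂ (g := f.comp σ) h rfl p).symm

end SkewPolynomial

/-- The algebra `R` of the theorem. It is not an abbreviation because instance search would then
find the operations of `RingQuot` instead of those of the ring structure. -/
def ColorAlgebra : Type := RingQuot CRel

namespace ColorAlgebra

noncomputable instance : Ring ColorAlgebra := inferInstanceAs (Ring (RingQuot CRel))

noncomputable instance : Algebra ℂ ColorAlgebra := inferInstanceAs (Algebra ℂ (RingQuot CRel))

open Polynomial

set_option maxSynthPendingDepth 3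

/-- The quotient map of the presentation of `R`. -/
noncomputable def mk : FreeAlgebra ℂ (Fin 3) →ₐ[ℂ] ColorAlgebra := RingQuot.mkAlgHom ℂ CRel

lemma mk_rel {a b : FreeAlgebra ℂ (Fin 3)} (h : CRel a b) : mk a = mk b :=
  RingQuot.mkAlgHom_rel ℂ h

/-- The images of the free generators. They are written `e₁`, `e₂`, `e₃` below, while the index
type `Fin 3` starts at `0`. -/
noncomputable def gen (i : Fin 3) : ColorAlgebra := mk (ι ℂ i)

local notation "e₁" => gen 0
local notation "e₂" => gen 1
local notation "e₃" => gen 2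

lemma e₁_mul_e₂ : e₁ * e₂ = e₂ * e₁ + e₂ := by
  have := mk_rel CRel.r12
  simp only [map_sub, map_mul] at this
  exact sub_eq_iff_eq_add'.1 this

lemma e₁_mul_e₃ : e₁ * e₃ = e₃ * e₁ := by
  have := mk_rel CRel.r13
  simp only [map_sub, map_mul, map_zero] at this
  exact sub_eq_zero.1 this

lemma e₂_mul_e₃ : e₂ * e₃ = -(e₃ * e₂) := by
  have := mk_rel CRel.r23
  simp only [map_add, map_mul, map_zero] at this
  exact eq_neg_of_add_eq_zero_left this

lemma e₂_mul_e₁ : e₂ * e₁ = (e₁ - 1) * e₂ := by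
  rw [sub_mul, one_mul, e₁_mul_e₂, add_sub_cancel_right]

lemma adjoin_generators : Algebra.adjoin ℂ {e₁, e₂, e₃} = ⊤ := by
  have range_gen : Set.range gen = {e₁, e₂, e₃} := by
    rw [Fin.range_fin_succ, Fin.range_fin_succ, Set.range_unique]
    rfl
  have range_gen_eq_image : Set.range gen = mk '' Set.range (ι ℂ) := Set.range_comp _ _
  rw [← range_gen, range_gen_eq_image, ← AlgHom.map_adjoin, FreeAlgebra.adjoin_range_ι,
    Algebra.map_top, AlgHom.range_eq_top]
  exact RingQuot.mkAlgHom_surjective ℂ CRel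

section Lift

variable {B : Type*} [Ring B] [Algebra ℂ B]

/-- The universal property of the presentation. -/
noncomputable def lift (b₁ b₂ b₃ : B) (h₁₂ : b₁ * b₂ = b₂ * b₁ + b₂) (h₁₃ : b₁ * b₃ = b₃ * b₁)
    (h₂₃ : b₂ * b₃ = -(b₃ * b₂)) : ColorAlgebra →ₐ[ℂ] B :=
  RingQuot.liftAlgHom ℂ ⟨FreeAlgebra.lift ℂ ![b₁, b₂, b₃], by
    rintro _ _ (_ | _ | _) <;> simp [h₁₂, h₁₃, h₂₃]⟩

variable {b₁ b₂ b₃ : B} (h₁₂ : b₁ * b₂ = b₂ * b₁ + b₂) (h₁₃ : b₁ * b₃ = b₃ * b₁)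
  (h₂₃ : b₂ * b₃ = -(b₃ * b₂))

lemma lift_mk (a : FreeAlgebra ℂ (Fin 3)) :
    lift b₁ b₂ b₃ h₁₂ h₁₃ h₂₃ (mk a) = FreeAlgebra.lift ℂ ![b₁, b₂, b₃] a :=
  RingQuot.liftAlgHom_mkAlgHom_apply ..

@[simp] lemma lift_e₁ : lift b₁ b₂ b₃ h₁₂ h₁₃ h₂₃ e₁ = b₁ := by simp [gen, lift_mk]

@[simp] lemma lift_e₂ : lift b₁ b₂ b₃ h₁₂ h₁₃ h₂₃ e₂ = b₂ := by simp [gen, lift_mk]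

@[simp] lemma lift_e₃ : lift b₁ b₂ b₃ h₁₂ h₁₃ h₂₃ e₃ = b₃ := by simp [gen, lift_mk]

end Lift

/-- The evaluation of polynomials in the commuting elements `e₁` (inner variable) and `e₃` (outer
variable). -/
noncomputable def ofPoly : ℂ[X][X] →ₐ[ℂ] ColorAlgebra :=
  eval₂AlgHom (aeval e₁) e₃ fun p ↦
    (semiconjBy_eval₂ (fun c ↦ (Algebra.commutes c e₃).symm) e₁_mul_e₃.symm p).symm

@[simp] lemma ofPoly_C_X : ofPoly (C X) = e₁ := (eval₂_C _ _).trans (aeval_X _)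

@[simp] lemma ofPoly_X : ofPoly X = e₃ := eval₂_X _ _

/-- The substitution `σ` on `ℂ[e₁][e₃]` with `e₂ * p = σ p * e₂`. -/
noncomputable def twist : ℂ[X][X] →ₐ[ℂ] ℂ[X][X] :=
  aevalTower (aeval (C X - 1)) (-X)

@[simp] lemma twist_C_X : twist (C X) = C X - 1 := by simp [twist]

@[simp] lemma twist_X : twist X = -X := by simp [twist]

lemma semiconjBy_e₂_aeval_e₁ (q : ℂ[X]) :
    SemiconjBy e₂ (aeval e₁ q) (aeval (e₁ - 1) q) :=
  semiconjBy_eval₂ (fun c ↦ (Algebra.commutes c e₂).symm) e₂_mul_e₁ q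

lemma semiconjBy_e₂_ofPoly (p : ℂ[X][X]) : SemiconjBy e₂ (ofPoly p) (ofPoly (twist p)) := by
  have conj_coeff (q : ℂ[X]) : SemiconjBy e₂ (aeval e₁ q) (ofPoly (aeval (C X - 1) q)) := by
    rw [← aeval_algHom_apply, map_sub, ofPoly_C_X, map_one]
    exact semiconjBy_e₂_aeval_e₁ q
  have conj_X : SemiconjBy e₂ e₃ (ofPoly (-X)) := by
    rw [map_neg, ofPoly_X]
    exact e₂_mul_e₃.trans (neg_mul _ _).symm
  have ofPoly_twist : ofPoly (twist p) = p.eval₂ ((ofPoly : ℂ[X][X] →+* ColorAlgebra).comp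
      (aeval (C X - 1) : ℂ[X] →ₐ[ℂ] ℂ[X][X]).toRingHom) (ofPoly (-X)) :=
    hom_eval₂ p _ (ofPoly : ℂ[X][X] →+* ColorAlgebra) (-X)
  rw [ofPoly_twist]
  exact semiconjBy_eval₂ conj_coeff conj_X p

/-- The left regular representation of `R` on normally ordered polynomials: the outermost variable
is `e₂`, and its coefficients in `ℂ[e₁][e₃]` are written on the left. -/
noncomputable def polyRep : ColorAlgebra →ₐ[ℂ] Module.End ℂ ℂ[X][X][X] :=
  lift (B := Module.End ℂ ℂ[X][X][X]) (LinearMap.mulLeft ℂ (C (C X)))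
    (LinearMap.mulRight ℂ X ∘ₗ (mapAlgHom twist).toLinearMap) (LinearMap.mulLeft ℂ (C X))
    (LinearMap.ext fun f ↦ by
      simp only [Module.End.mul_apply, LinearMap.coe_comp, AlgHom.coe_toLinearMap, coe_mapAlgHom,
        Function.comp_apply, LinearMap.mulRight_apply, LinearMap.mulLeft_apply,
        LinearMap.add_apply, Polynomial.map_mul, map_C, RingHom.coe_coe, twist_C_X, map_sub,
        map_one]
      ring)
    (LinearMap.ext fun f ↦ mul_left_comm _ _ _)
    (LinearMap.ext fun f ↦ by simp [mul_assoc])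

lemma polyRep_e₁ (f : ℂ[X][X][X]) : polyRep e₁ f = (C X : ℂ[X][X]) • f := by
  simp [polyRep, smul_eq_C_mul]

lemma polyRep_e₂ (f : ℂ[X][X][X]) : polyRep e₂ f = f.map twist * X := by simp [polyRep]

lemma polyRep_e₃ (f : ℂ[X][X][X]) : polyRep e₃ f = (X : ℂ[X][X]) • f := by
  simp [polyRep, smul_eq_C_mul]

lemma eval₂_polyRep (a : ColorAlgebra) (f : ℂ[X][X][X]) :
    (polyRep a f).eval₂ ofPoly e₂ = a * f.eval₂ ofPoly e₂ := by
  have ha : a ∈ Algebra.adjoin ℂ {e₁, e₂, e₃} := adjoin_generators ▸ Algebra.mem_top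
  induction ha using Algebra.adjoin_induction generalizing f with
  | mem g hg =>
    obtain rfl | rfl | rfl := hg
    · rw [polyRep_e₁, eval₂_smul]
      exact congrArg (· * _) ofPoly_C_X
    · rw [polyRep_e₂]
      exact eval₂_map_mul_X_of_semiconjBy semiconjBy_e₂_ofPoly f
    · rw [polyRep_e₃, eval₂_smul]
      exact congrArg (· * _) ofPoly_X
  | algebraMap c =>
    rw [AlgHom.commutes, Module.algebraMap_end_apply, ← algebraMap_smul ℂ[X][X] c f, eval₂_smul]
    exact congrArg (· * _) (ofPoly.commutes c)
  | add a b _ _ iha ihb => simp only [map_add, LinearMap.add_apply, eval₂_add, iha, ihb, add_mul]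
  | mul a b _ _ iha ihb => rw [map_mul, Module.End.mul_apply, iha, ihb, mul_assoc]

lemma polyRep_mul_X (a : ColorAlgebra) (f : ℂ[X][X][X]) : polyRep a (f * X) = polyRep a f * X := by
  have ha : a ∈ Algebra.adjoin ℂ {e₁, e₂, e₃} := adjoin_generators ▸ Algebra.mem_top
  induction ha using Algebra.adjoin_induction generalizing f with
  | mem g hg =>
    obtain rfl | rfl | rfl := hg
    · simp only [polyRep_e₁, smul_mul_assoc]
    · simp only [polyRep_e₂, Polynomial.map_mul, map_X]
    · simp only [polyRep_e₃, smul_mul_assoc]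
  | algebraMap c => simp [Module.algebraMap_end_apply]
  | add a b _ _ iha ihb => simp only [map_add, LinearMap.add_apply, iha, ihb, add_mul]
  | mul a b _ _ iha ihb => simp only [map_mul polyRep, Module.End.mul_apply, iha, ihb]

lemma isRightRegular_e₂ : IsRightRegular e₂ := by
  have eval₂_polyRep_one (a : ColorAlgebra) : (polyRep a 1).eval₂ ofPoly e₂ = a := by
    rw [eval₂_polyRep, eval₂_one, mul_one]
  have polyRep_mul_e₂ (a : ColorAlgebra) : polyRep (a * e₂) 1 = polyRep a 1 * X := by
    rw [map_mul, Module.End.mul_apply, ← polyRep_mul_X]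
    simp [polyRep_e₂]
  intro a b (h : a * e₂ = b * e₂)
  have : polyRep a 1 = polyRep b 1 := by
    rw [← mul_left_inj' (X_ne_zero (R := ℂ[X][X])), ← polyRep_mul_e₂, h, polyRep_mul_e₂]
  rw [← eval₂_polyRep_one a, this, eval₂_polyRep_one]

instance isTwoSided_span_e₂ : (Ideal.span {e₂}).IsTwoSided := by
  refine isTwoSided_span_of_adjoin_eq_top adjoin_generators ?_
  simp only [Set.mem_singleton_iff, Set.mem_insert_iff, forall_eq_or_imp, forall_eq,
    Ideal.mem_span_singleton']
  exact ⟨⟨e₁ - 1, e₂_mul_e₁.symm⟩, ⟨e₂, rfl⟩, ⟨-e₃, by rw [e₂_mul_e₃, neg_mul]⟩⟩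

instance isTwoSided_span_e₂_e₃ : (Ideal.span {e₂, e₃}).IsTwoSided := by
  refine isTwoSided_span_of_adjoin_eq_top adjoin_generators ?_
  simp only [Set.mem_singleton_iff, Set.mem_insert_iff, forall_eq_or_imp, forall_eq,
    Ideal.mem_span_pair]
  exact ⟨⟨⟨e₁ - 1, 0, by simp [e₂_mul_e₁]⟩, ⟨e₂, 0, by simp⟩, ⟨0, e₂, by simp⟩⟩,
    ⟨⟨0, e₁, by simp [e₁_mul_e₃]⟩, ⟨e₃, 0, by simp⟩, ⟨0, e₃, by simp⟩⟩⟩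

instance isTwoSided_span_generators : (Ideal.span {e₁, e₂, e₃}).IsTwoSided :=
  isTwoSided_span_of_adjoin_eq_top adjoin_generators fun _ _ _ hg ↦
    Ideal.mul_mem_left _ _ (Ideal.subset_span hg)

lemma mem_span_e₂_of_mul_e₃_mem {c : ColorAlgebra} (hc : c * e₃ ∈ Ideal.span {e₂}) :
    c ∈ Ideal.span {e₂} := by
  let φ : ColorAlgebra →ₐ[ℂ] ℂ[X][X] := lift (C X) 0 X (by simp) (mul_comm _ _) (by simp)
  refine mem_of_map_eq_zero_of_adjoin_eq_top adjoin_generators φ ofPoly _ ?_ ?_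
  · simp [φ]
  · obtain ⟨u, hu⟩ := Ideal.mem_span_singleton'.1 hc
    have : φ c * X = 0 := by simpa [φ] using (congrArg φ hu).symm
    exact (mul_eq_zero_iff_right X_ne_zero).1 this

lemma mem_span_e₂_e₃_of_mul_e₁_mem {c : ColorAlgebra} (hc : c * e₁ ∈ Ideal.span {e₂, e₃}) :
    c ∈ Ideal.span {e₂, e₃} := by
  let φ : ColorAlgebra →ₐ[ℂ] ℂ[X] := lift X 0 0 (by simp) (by simp) (by simp)
  refine mem_of_map_eq_zero_of_adjoin_eq_top adjoin_generators φ (aeval e₁) _ ?_ ?_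
  · simp [φ, Submodule.mem_span_of_mem, Ideal.span]
  · obtain ⟨u, v, huv⟩ := Ideal.mem_span_pair.1 hc
    have : φ c * X = 0 := by simpa [φ] using (congrArg φ huv).symm
    exact (mul_eq_zero_iff_right X_ne_zero).1 this

lemma mem_span_generators_of_map_eq_zero {ε : ColorAlgebra →ₐ[ℂ] ℂ} (hε : ∀ i, ε (gen i) = 0)
    {a : ColorAlgebra} (ha : ε a = 0) : a ∈ Ideal.span {e₁, e₂, e₃} := by
  refine mem_of_map_eq_zero_of_adjoin_eq_top adjoin_generators ε (Algebra.ofId ℂ _) _ ?_ ha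
  intro g hg
  have map_g : ε g = 0 := by obtain rfl | rfl | rfl := hg <;> exact hε _
  rw [map_g, map_zero, sub_zero]
  exact Ideal.subset_span hg

/-- The matrix of `R³ → R` in the resolution: generators of the augmentation ideal. -/
noncomputable def d₁ : Matrix (Fin 3) (Fin 1) ColorAlgebra := !![e₂; e₃; e₁]

/-- The matrix of `R³ → R³` in the resolution: its rows are the defining relations of `R`, read as
syzygies between `e₂`, `e₃`, `e₁`. -/
noncomputable def d₂ : Matrix (Fin 3) (Fin 3) ColorAlgebra :=
  !![e₃, e₂, 0; e₁ - 1, 0, -e₂; 0, e₁, -e₃]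

/-- The matrix of `R → R³` in the resolution: the syzygy between the rows of `d₂`. -/
noncomputable def d₃ : Matrix (Fin 1) (Fin 3) ColorAlgebra := !![1 - e₁, e₃, e₂]

lemma d₂_mul_d₁ : d₂ * d₁ = 0 := by
  ext i j
  fin_cases i <;> fin_cases j <;>
    simp [d₁, d₂, Matrix.mul_apply, Fin.sum_univ_succ, e₂_mul_e₃, e₂_mul_e₁, e₁_mul_e₃]

lemma d₃_mul_d₂ : d₃ * d₂ = 0 := by
  ext i j
  fin_cases i
  fin_cases j <;>
    simp [d₂, d₃, Matrix.mul_apply, Fin.sum_univ_succ, e₂_mul_e₃, e₂_mul_e₁, e₁_mul_e₃,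
      sub_mul, mul_sub]

lemma exists_eq_mul_of_mul_e₂_add_mul_e₃_eq_zero {b c : ColorAlgebra} (h : b * e₂ + c * e₃ = 0) :
    ∃ r, b = r * e₃ ∧ c = r * e₂ := by
  have hc : c * e₃ ∈ Ideal.span {e₂} :=
    Ideal.mem_span_singleton'.2 ⟨-b, by rw [neg_mul]; exact neg_eq_of_add_eq_zero_right h⟩
  obtain ⟨r, rfl⟩ := Ideal.mem_span_singleton'.1 (mem_span_e₂_of_mul_e₃_mem hc)
  refine ⟨r, isRightRegular_e₂ ?_, rfl⟩
  change b * e₂ = r * e₃ * e₂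
  rw [mul_assoc, e₂_mul_e₃, mul_neg, ← sub_eq_add_neg, sub_eq_zero, ← mul_assoc] at h
  exact h

lemma exists_vecMul_d₂_of_vecMul_d₁_eq_zero {v : Fin 3 → ColorAlgebra} (hv : v ᵥ* d₁ = 0) :
    ∃ w, w ᵥ* d₂ = v := by
  have relation : v 0 * e₂ + v 1 * e₃ + v 2 * e₁ = 0 := by
    simpa [d₁, Matrix.vecMul, dotProduct, Fin.sum_univ_three] using congrFun hv 0
  have hv₂ : v 2 * e₁ ∈ Ideal.span {e₂, e₃} :=
    Ideal.mem_span_pair.2 ⟨-v 0, -v 1, by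
      rw [eq_neg_of_add_eq_zero_right relation]; noncomm_ring⟩
  obtain ⟨u, w, huw⟩ := Ideal.mem_span_pair.1 (mem_span_e₂_e₃_of_mul_e₁_mem hv₂)
  have reduced : (v 0 + u * (e₁ - 1)) * e₂ + (v 1 + w * e₁) * e₃ = 0 := by
    rw [← relation, ← huw]
    simp only [add_mul, mul_assoc, e₂_mul_e₁, e₁_mul_e₃]
    abel
  obtain ⟨r, hr₀, hr₁⟩ := exists_eq_mul_of_mul_e₂_add_mul_e₃_eq_zero reduced
  refine ⟨![r, -u, -w], ?_⟩
  ext i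
  fin_cases i
  · simp [d₂, Matrix.vecMul, dotProduct, Fin.sum_univ_three, ← hr₀]
  · simp [d₂, Matrix.vecMul, dotProduct, Fin.sum_univ_three, ← hr₁]
  · simp [d₂, Matrix.vecMul, dotProduct, Fin.sum_univ_three, ← huw]

lemma exists_vecMul_d₃_of_vecMul_d₂_eq_zero {v : Fin 3 → ColorAlgebra} (hv : v ᵥ* d₂ = 0) :
    ∃ w, w ᵥ* d₃ = v := by
  have relation₁ : v 0 * e₂ + v 2 * e₁ = 0 := by
    simpa [d₂, Matrix.vecMul, dotProduct, Fin.sum_univ_three] using congrFun hv 1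
  have relation₂ : v 1 * e₂ + v 2 * e₃ = 0 := by
    rw [← neg_eq_zero, neg_add]
    simpa [d₂, Matrix.vecMul, dotProduct, Fin.sum_univ_three] using congrFun hv 2
  obtain ⟨r, hr₁, hr₂⟩ := exists_eq_mul_of_mul_e₂_add_mul_e₃_eq_zero relation₂
  have hr₀ : v 0 = r * (1 - e₁) := by
    refine isRightRegular_e₂ (?_ : v 0 * e₂ = r * (1 - e₁) * e₂)
    rw [eq_neg_of_add_eq_zero_left relation₁, hr₂, mul_assoc, e₂_mul_e₁]
    noncomm_ring
  refine ⟨![r], ?_⟩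
  ext i
  fin_cases i
  · simp [d₃, Matrix.vecMul, dotProduct, hr₀]
  · simp [d₃, Matrix.vecMul, dotProduct, hr₁]
  · simp [d₃, Matrix.vecMul, dotProduct, hr₂]

lemma eq_zero_of_vecMul_d₃_eq_zero {v : Fin 1 → ColorAlgebra} (hv : v ᵥ* d₃ = 0) : v = 0 := by
  have : v 0 * e₂ = 0 := by
    simpa [d₃, Matrix.vecMul, dotProduct] using congrFun hv 2
  ext i
  rw [Subsingleton.elim i 0]
  exact isRightRegular_e₂.mul_right_eq_zero_iff.1 this

/-- The ranks of the free modules in the resolution of the trivial module. -/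
def resolutionRank : ℕ → ℕ
  | 0 => 1
  | 1 => 3
  | 2 => 3
  | 3 => 1
  | _ + 4 => 0

/-- The differentials `d₁`, `d₂`, `d₃` of the resolution, indexed by their target degree. -/
noncomputable def differential :
    (n : ℕ) → Matrix (Fin (resolutionRank (n + 1))) (Fin (resolutionRank n)) ColorAlgebra
  | 0 => d₁
  | 1 => d₂
  | 2 => d₃
  | _ + 3 => 0

lemma exact_differential (n : ℕ) :
    Function.Exact (differential (n + 1)).vecMulLinear (differential n).vecMulLinear :=
  match n with
  | 0 => exact_vecMulLinear_of_mul_eq_zero d₂_mul_d₁ fun _ ↦ exists_vecMul_d₂_of_vecMul_d₁_eq_zero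
  | 1 => exact_vecMulLinear_of_mul_eq_zero d₃_mul_d₂ fun _ ↦ exists_vecMul_d₃_of_vecMul_d₂_eq_zero
  | 2 => exact_vecMulLinear_of_mul_eq_zero (Matrix.zero_mul d₃) fun _ hv ↦
      ⟨0, (eq_zero_of_vecMul_d₃_eq_zero hv).symm⟩
  | _ + 3 => exact_vecMulLinear_of_mul_eq_zero (Matrix.zero_mul _) fun _ _ ↦
      ⟨0, funext fun i ↦ i.elim0⟩

section Augmentation

variable {ε : ColorAlgebra →ₐ[ℂ] ℂ} (hε : ∀ i, ε (gen i) = 0)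

include hε

lemma exact_d₁_toTrivialModule :
    Function.Exact d₁.vecMulLinear (toTrivialModule ε ∘ₗ LinearMap.proj 0) := by
  have vecMul_d₁ (w : Fin 3 → ColorAlgebra) :
      (w ᵥ* d₁) 0 = w 0 * e₂ + w 1 * e₃ + w 2 * e₁ := by
    simp [d₁, Matrix.vecMul, dotProduct, Fin.sum_univ_three]
  refine fun v ↦ ⟨fun hv ↦ ?_, ?_⟩
  · obtain ⟨a, b, c, habc⟩ := Submodule.mem_span_triple.1
      (mem_span_generators_of_map_eq_zero hε (a := v 0) hv)
    refine ⟨![b, c, a], funext fun i ↦ ?_⟩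
    rw [Subsingleton.elim i 0, Matrix.vecMulLinear_apply, vecMul_d₁, ← habc]
    simp only [Matrix.cons_val_zero, Matrix.cons_val_one, Matrix.cons_val, smul_eq_mul]
    abel
  · rintro ⟨w, rfl⟩
    change ε ((w ᵥ* d₁) 0) = 0
    simp [vecMul_d₁, hε]

/-- The resolution `0 → R → R³ → R³ → R → ℂ → 0` of the trivial module. -/
noncomputable def resolution : FiniteFreeResolution (trivialModule ε) where
  rank := resolutionRank
  d := differential
  aug := toTrivialModule ε ∘ₗ LinearMap.proj (0 : Fin 1)
  aug_surjective :=
    (toTrivialModule_surjective ε).comp (Function.surjective_eval (0 : Fin 1))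
  exact_aug := exact_d₁_toTrivialModule hε
  exact_d := exact_differential

lemma rank_map_d₁ : (d₁.map ε).rank = 0 := by
  have : d₁.map ε = 0 := by
    ext i j
    fin_cases i <;> fin_cases j <;> simp [d₁, hε]
  rw [this, Matrix.rank_zero]

lemma rank_map_d₂ : (d₂.map ε).rank = 1 := by
  have : d₂.map ε = Matrix.vecMulVec ![0, 1, 0] ![-1, 0, 0] := by
    ext i j
    fin_cases i <;> fin_cases j <;> simp [d₂, hε, Matrix.vecMulVec_apply]
  rw [this]
  exact rank_vecMulVec_of_ne_zero (by simp) (by simp)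

lemma rank_map_d₃ : (d₃.map ε).rank = 1 := by
  have : d₃.map ε = Matrix.vecMulVec ![1] ![1, 0, 0] := by
    ext i j
    fin_cases i
    fin_cases j <;> simp [d₃, hε, Matrix.vecMulVec_apply]
  rw [this]
  exact rank_vecMulVec_of_ne_zero (by simp) (by simp)

lemma extDim_zero : extDim ColorAlgebra ε 0 = 1 := by
  have rank_formula : extDim ColorAlgebra ε 0 + (d₁.map ε).rank = 1 :=
    (resolution hε).finrank_ext_zero_add ε
  rwa [rank_map_d₁ hε] at rank_formula

lemma extDim_one : extDim ColorAlgebra ε 1 = 2 := by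
  have rank_formula : extDim ColorAlgebra ε 1 + (d₁.map ε).rank + (d₂.map ε).rank = 3 :=
    (resolution hε).finrank_ext_succ_add ε 0
  rw [rank_map_d₁ hε, rank_map_d₂ hε] at rank_formula
  omega

lemma extDim_two : extDim ColorAlgebra ε 2 = 1 := by
  have rank_formula : extDim ColorAlgebra ε 2 + (d₂.map ε).rank + (d₃.map ε).rank = 3 :=
    (resolution hε).finrank_ext_succ_add ε 1
  rw [rank_map_d₂ hε, rank_map_d₃ hε] at rank_formula
  omega

lemma extDim_add_three (n : ℕ) : extDim ColorAlgebra ε (n + 3) = 0 := by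
  have rank_formula := (resolution hε).finrank_ext_succ_add ε (n + 2)
  cases n with
  | zero =>
    change extDim ColorAlgebra ε (0 + 3) + (d₃.map ε).rank + _ = 1 at rank_formula
    rw [rank_map_d₃ hε] at rank_formula
    omega
  | succ n => exact (Nat.add_eq_zero_iff.1 (Nat.add_eq_zero_iff.1 rank_formula).1).1

end Augmentation

end ColorAlgebra

theorem betti_numbers (ε : RingQuot CRel →ₐ[ℂ] ℂ)
    (hε : ∀ i : Fin 3, ε (RingQuot.mkAlgHom ℂ CRel (ι ℂ i)) = 0) :
    extDim (RingQuot CRel) ε 0 = 1 ∧ extDim (RingQuot CRel) ε 1 = 2 ∧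
    extDim (RingQuot CRel) ε 2 = 1 ∧ ∀ n ≥ 3, extDim (RingQuot CRel) ε n = 0 := by
  refine ⟨ColorAlgebra.extDim_zero hε, ColorAlgebra.extDim_one hε, ColorAlgebra.extDim_two hε,
    fun n hn ↦ ?_⟩
  obtain ⟨m, rfl⟩ := Nat.exists_eq_add_of_le' hn
  exact ColorAlgebra.extDim_add_three hε m
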